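/- arXiv:0911.1900 — 2 statements merged into one kernel-verified Lean document; each statement's English description precedes it below -/
import Mathlib

section
/- Let G=(V,A) be a finite loopless digraph, r ∈ V, T an out-tree of G rooted at r, and v ∈ V(T) a vertex with out-degree 0 in T whose out-neighborhood in G is N⁺(v) = {x₁,x₂} with x₁ ≠ x₂. Assume x₁ and x₂ each have in-degree at least 2 in G. Let T* be a spanning out-tree of G rooted at r with T* ⪰ T in which v is internal, both x₁ and x₂ are leaves, and some vertex u ∈ (N⁻(x₁) ∪ N⁻(x₂)) \ {v,x₁,x₂} is internal. Let T' be a spanning out-tree of G rooted at r with T' ⪰ T in which v is a leaf, chosen so that |leaves(T')| is maximum among all such trees. Then |leaves(T')| ≥ |leaves(T*)|. -/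
variable {V : Type*} [DecidableEq V] [Fintype V]

/-- The vertex set of an arc set `T` together with the root `r`. -/
def dverts (r : V) (T : Finset (V × V)) : Finset V :=
  insert r (T.image Prod.fst ∪ T.image Prod.snd)

/-- In-degree of `v` in the arc set `T`. -/
def dInDeg (T : Finset (V × V)) (v : V) : ℕ :=
  (T.filter fun a => a.2 = v).card

/-- Out-degree of `v` in the arc set `T`. -/
def dOutDeg (T : Finset (V × V)) (v : V) : ℕ :=
  (T.filter fun a => a.1 = v).card

/-- Reachability by a directed path using only arcs of `T`. -/
def DReach (T : Finset (V × V)) (x y : V) : Prop :=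
  Relation.ReflTransGen (fun a b => (a, b) ∈ T) x y

/-- A loopless arc set. -/
def DLoopless (A : Finset (V × V)) : Prop := ∀ a ∈ A, a.1 ≠ a.2

/-- `T` is an out-tree of the digraph with arc set `A`, rooted at `r`. -/
def IsOutTree (A : Finset (V × V)) (r : V) (T : Finset (V × V)) : Prop :=
  T ⊆ A ∧ dInDeg T r = 0 ∧ (∀ v ∈ dverts r T, v ≠ r → dInDeg T v = 1) ∧
    ∀ v ∈ dverts r T, DReach T r v

/-- `T` is a spanning out-tree of the digraph with arc set `A`, rooted at `r`. -/
def IsSpanningOutTree (A : Finset (V × V)) (r : V) (T : Finset (V × V)) : Prop :=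
  IsOutTree A r T ∧ dverts r T = Finset.univ

/-- The leaves of an out-tree: vertices of out-degree 0. -/
def dleaves (r : V) (T : Finset (V × V)) : Finset V :=
  (dverts r T).filter fun v => dOutDeg T v = 0

/-!
Move each of `x₁`, `x₂` that hangs below `v` in `Tstar` to another in-neighbour. A vertex can be
moved below `w` as soon as `w` is not one of its descendants, which is automatic for a leaf. Taking
the internal vertex `u` as one of the two new parents, the only vertex that can become internal is
the other new parent, and `v` becomes a leaf: the number of internal vertices does not grow.
-/

/-- The internal vertices of an arc set: those of positive out-degree, encoded as the tails of its
arcs. In a spanning out-tree they are the complement of the leaves. -/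
def dinternal (S : Finset (V × V)) : Finset V :=
  S.image Prod.fst

section ArcSets

variable {α : Type*} [DecidableEq α] {R S : Finset (α × α)} {p r v w x y : α}

theorem mem_dinternal : v ∈ dinternal S ↔ ∃ y, (v, y) ∈ S := by
  simp [dinternal]

theorem dinternal_subset_insert (h : R ⊆ insert (w, x) S) :
    dinternal R ⊆ insert w (dinternal S) :=
  (Finset.image_mono Prod.fst h).trans (Finset.image_insert ..).subset

theorem dOutDeg_eq_zero_iff : dOutDeg S v = 0 ↔ v ∉ dinternal S := by
  simp only [dOutDeg, Finset.card_eq_zero, Finset.filter_eq_empty_iff, dinternal, Finset.mem_image,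
    not_exists, not_and]

theorem one_le_dOutDeg_iff : 1 ≤ dOutDeg S v ↔ v ∈ dinternal S := by
  rw [Nat.one_le_iff_ne_zero, Ne, dOutDeg_eq_zero_iff, not_not]

theorem dInDeg_eq_zero_iff : dInDeg S v = 0 ↔ ∀ p, (p, v) ∉ S := by
  rw [dInDeg, Finset.card_eq_zero, Finset.filter_eq_empty_iff]
  grind

theorem dInDeg_le_one_iff : dInDeg S v ≤ 1 ↔ ∀ p q, (p, v) ∈ S → (q, v) ∈ S → p = q := by
  simp only [dInDeg, Finset.card_le_one, Finset.mem_filter, Prod.forall, Prod.mk.injEq]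
  grind

theorem exists_arc_ne_of_two_le_dInDeg (h : 2 ≤ dInDeg S x) (v : α) :
    ∃ w, (w, x) ∈ S ∧ w ≠ v := by
  by_contra! hall
  have : dInDeg S x ≤ 1 :=
    dInDeg_le_one_iff.2 fun p q hp hq => (hall p hp).trans (hall q hq).symm
  omega

theorem DReach.eq_of_notMem_dinternal (h : DReach S x w) (hx : x ∉ dinternal S) : x = w := by
  rcases Relation.ReflTransGen.cases_head h with heq | ⟨y, hxy, -⟩
  · exact heq
  · exact absurd (mem_dinternal.2 ⟨y, hxy⟩) hx

theorem DReach.erase (h : DReach S r w) (hxw : ¬ DReach S x w) :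
    DReach (S.erase (p, x)) r w := by
  induction h with
  | refl => exact .refl
  | @tail b c _ hbc ih =>
    have hcx : c ≠ x := by
      rintro rfl
      exact hxw .refl
    have hxb : ¬ DReach S x b := fun hxb => hxw (hxb.tail hbc)
    exact (ih hxb).tail (Finset.mem_erase.2 ⟨by simp [hcx], hbc⟩)

theorem DReach.insert_erase (hy : DReach S r y) (hw : DReach S r w) (hxw : ¬ DReach S x w) :
    DReach (insert (w, x) (S.erase (p, x))) r y := by
  have hx : DReach (insert (w, x) (S.erase (p, x))) r x :=
    .tail (Relation.ReflTransGen.mono (fun _ _ => Finset.mem_insert_of_mem) _ _ (hw.erase hxw))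
      (Finset.mem_insert_self _ _)
  induction hy with
  | refl => exact .refl
  | @tail b c _ hbc ih =>
    by_cases hcx : c = x
    · exact hcx ▸ hx
    · exact ih.tail (Finset.mem_insert_of_mem (Finset.mem_erase.2 ⟨by simp [hcx], hbc⟩))

end ArcSets

section SpanningOutTrees

variable {A R S : Finset (V × V)} {p r u v w x x₁ x₂ : V}

theorem isSpanningOutTree_iff :
    IsSpanningOutTree A r S ↔ S ⊆ A ∧ (∀ p, (p, r) ∉ S) ∧
      (∀ y p q, (p, y) ∈ S → (q, y) ∈ S → p = q) ∧ ∀ y, DReach S r y := by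
  constructor
  · rintro ⟨⟨hSA, hroot, hdeg, hreach⟩, hverts⟩
    simp only [hverts, Finset.mem_univ, true_imp_iff] at hdeg hreach
    refine ⟨hSA, dInDeg_eq_zero_iff.1 hroot, fun y => dInDeg_le_one_iff.1 ?_, hreach⟩
    by_cases hy : y = r
    · exact hy ▸ hroot.le.trans zero_le_one
    · exact (hdeg y hy).le
  · rintro ⟨hSA, hroot, huniq, hreach⟩
    have hparent (y : V) (hy : y ≠ r) : ∃ p, (p, y) ∈ S := by
      rcases Relation.ReflTransGen.cases_tail (hreach y) with heq | ⟨p, -, hp⟩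
      · exact absurd heq hy
      · exact ⟨p, hp⟩
    refine ⟨⟨hSA, dInDeg_eq_zero_iff.2 hroot, fun y _ hy => ?_, fun y _ => hreach y⟩, ?_⟩
    · have hle : dInDeg S y ≤ 1 := dInDeg_le_one_iff.2 (huniq y)
      have hne : dInDeg S y ≠ 0 := by
        obtain ⟨p, hp⟩ := hparent y hy
        exact fun h => dInDeg_eq_zero_iff.1 h p hp
      omega
    · refine Finset.eq_univ_of_forall fun y => ?_
      by_cases hy : y = r
      · simp [dverts, hy]
      · obtain ⟨p, hp⟩ := hparent y hy
        exact Finset.mem_insert_of_mem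
          (Finset.mem_union_right _ (Finset.mem_image_of_mem Prod.snd hp))

namespace IsSpanningOutTree

theorem dleaves_eq_compl_dinternal (hS : IsSpanningOutTree A r S) :
    dleaves r S = (dinternal S)ᶜ := by
  ext y
  simp [dleaves, hS.2, dOutDeg_eq_zero_iff]

theorem card_dleaves_le_card_dleaves (hS : IsSpanningOutTree A r S)
    (hR : IsSpanningOutTree A r R) (h : (dinternal R).card ≤ (dinternal S).card) :
    (dleaves r S).card ≤ (dleaves r R).card := by
  rw [hS.dleaves_eq_compl_dinternal, hR.dleaves_eq_compl_dinternal, Finset.card_compl,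
    Finset.card_compl]
  exact Nat.sub_le_sub_left h _

theorem insert_erase (hS : IsSpanningOutTree A r S) (hp : (p, x) ∈ S) (hw : (w, x) ∈ A)
    (hxw : ¬ DReach S x w) : IsSpanningOutTree A r (insert (w, x) (S.erase (p, x))) := by
  obtain ⟨hSA, hroot, huniq, hreach⟩ := isSpanningOutTree_iff.1 hS
  have hxr : x ≠ r := by
    rintro rfl
    exact hroot p hp
  refine isSpanningOutTree_iff.2 ⟨?_, ?_, ?_, fun y => (hreach y).insert_erase (hreach w) hxw⟩
  · exact Finset.insert_subset hw ((Finset.erase_subset _ _).trans hSA)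
  · intro q hq
    have hqr : (q, r) ∈ S := by simpa [hxr.symm] using hq
    exact hroot q hqr
  · intro y a b ha hb
    simp only [Finset.mem_insert, Finset.mem_erase, Prod.mk.injEq] at ha hb
    grind

theorem exists_subset_insert_erase (hS : IsSpanningOutTree A r S) (hx : x ∉ dinternal S)
    (hw : (w, x) ∈ A) (hwx : w ≠ x) (v : V) :
    ∃ R, IsSpanningOutTree A r R ∧ S.erase (v, x) ⊆ R ∧ R ⊆ insert (w, x) (S.erase (v, x)) := by
  by_cases hvx : (v, x) ∈ S
  · have hxw : ¬ DReach S x w := fun h => hwx (h.eq_of_notMem_dinternal hx).symm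
    exact ⟨_, hS.insert_erase hvx hw hxw, Finset.subset_insert _ _, subset_rfl⟩
  · rw [Finset.erase_eq_of_notMem hvx]
    exact ⟨S, hS, subset_rfl, Finset.subset_insert _ _⟩

theorem exists_notMem_dinternal (hS : IsSpanningOutTree A r S) (hv : v ∈ dinternal S)
    (hchild : ∀ y, (v, y) ∈ S → y = x₁ ∨ y = x₂)
    (hx₁ : x₁ ∉ dinternal S) (hx₂ : x₂ ∉ dinternal S)
    (hu : (u, x₁) ∈ A) (huS : u ∈ dinternal S) (huv : u ≠ v)
    (hw : (w, x₂) ∈ A) (hwx₂ : w ≠ x₂) (hwv : w ≠ v) :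
    ∃ R, IsSpanningOutTree A r R ∧ (∀ a ∈ S, a.1 ≠ v → a ∈ R) ∧ v ∉ dinternal R ∧
      (dinternal R).card ≤ (dinternal S).card := by
  have hux₁ : u ≠ x₁ := ne_of_mem_of_not_mem huS hx₁
  obtain ⟨Q, hQ, hSQ, hQS⟩ := hS.exists_subset_insert_erase hx₁ hu hux₁ v
  have hintQ : dinternal Q ⊆ dinternal S := by
    have h := dinternal_subset_insert (hQS.trans (Finset.insert_subset_insert _
      (Finset.erase_subset _ _)))
    rwa [Finset.insert_eq_of_mem huS] at h
  obtain ⟨R, hR, hQR, hRQ⟩ := hQ.exists_subset_insert_erase (fun h => hx₂ (hintQ h)) hw hwx₂ v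
  have hvR : v ∉ dinternal R := by
    intro h
    obtain ⟨y, hvy⟩ := mem_dinternal.1 h
    have hQy : y ≠ x₂ ∧ (v, y) ∈ Q := by simpa [hwv.symm] using hRQ hvy
    have hSy : y ≠ x₁ ∧ (v, y) ∈ S := by simpa [huv.symm] using hQS hQy.2
    exact (hchild y hSy.2).elim hSy.1 hQy.1
  have hintR : dinternal R ⊆ insert w ((dinternal S).erase v) := by
    have hsub : dinternal R ⊆ insert w (dinternal S) :=
      (dinternal_subset_insert (hRQ.trans (Finset.insert_subset_insert _
        (Finset.erase_subset _ _)))).trans (Finset.insert_subset_insert _ hintQ)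
    rw [← Finset.erase_insert_of_ne hwv]
    exact Finset.subset_erase.2 ⟨hsub, hvR⟩
  refine ⟨R, hR, fun a ha hav => ?_, hvR, ?_⟩
  · have hne (x : V) : a ≠ (v, x) := fun h => hav (congrArg Prod.fst h)
    exact hQR (Finset.mem_erase.2 ⟨hne x₂, hSQ (Finset.mem_erase.2 ⟨hne x₁, ha⟩)⟩)
  · calc (dinternal R).card ≤ (insert w ((dinternal S).erase v)).card := Finset.card_le_card hintR
      _ ≤ ((dinternal S).erase v).card + 1 := Finset.card_insert_le _ _
      _ = (dinternal S).card := Finset.card_erase_add_one hv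

end IsSpanningOutTree

end SpanningOutTrees

theorem stmt2_general (A T Tstar : Finset (V × V)) (r v x₁ x₂ u : V)
    (hA : DLoopless A) (hvdeg : dOutDeg T v = 0)
    (hchild : ∀ y : V, (v, y) ∈ Tstar → y = x₁ ∨ y = x₂)
    (hd1 : 2 ≤ dInDeg A x₁) (hd2 : 2 ≤ dInDeg A x₂)
    (hTs : IsSpanningOutTree A r Tstar) (hTTs : T ⊆ Tstar)
    (hvint : 1 ≤ dOutDeg Tstar v) (hx1 : dOutDeg Tstar x₁ = 0) (hx2 : dOutDeg Tstar x₂ = 0)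
    (hu : (u, x₁) ∈ A ∨ (u, x₂) ∈ A) (huv : u ≠ v) (huint : 1 ≤ dOutDeg Tstar u) :
    ∃ S, IsSpanningOutTree A r S ∧ T ⊆ S ∧ dOutDeg S v = 0 ∧
      (dleaves r Tstar).card ≤ (dleaves r S).card := by
  rw [one_le_dOutDeg_iff] at hvint huint
  rw [dOutDeg_eq_zero_iff] at hvdeg hx1 hx2
  obtain ⟨S, hS, hkeep, hvS, hcard⟩ : ∃ S, IsSpanningOutTree A r S ∧
      (∀ a ∈ Tstar, a.1 ≠ v → a ∈ S) ∧ v ∉ dinternal S ∧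
      (dinternal S).card ≤ (dinternal Tstar).card := by
    rcases hu with hu | hu
    · obtain ⟨w, hw, hwv⟩ := exists_arc_ne_of_two_le_dInDeg hd2 v
      exact hTs.exists_notMem_dinternal hvint hchild hx1 hx2 hu huint huv hw (hA _ hw) hwv
    · obtain ⟨w, hw, hwv⟩ := exists_arc_ne_of_two_le_dInDeg hd1 v
      exact hTs.exists_notMem_dinternal hvint (fun y hy => (hchild y hy).symm) hx2 hx1 hu huint
        huv hw (hA _ hw) hwv
  refine ⟨S, hS, fun a ha => hkeep a (hTTs ha) ?_, dOutDeg_eq_zero_iff.2 hvS,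
    hTs.card_dleaves_le_card_dleaves hS hcard⟩
  exact ne_of_mem_of_not_mem (Finset.mem_image_of_mem Prod.fst ha) hvdeg

theorem stmt2 (A T T' Tstar : Finset (V × V)) (r v x₁ x₂ u : V)
    (hA : DLoopless A) (hT : IsOutTree A r T) (hv : v ∈ dverts r T)
    (hvdeg : dOutDeg T v = 0)
    (hNv : ∀ y : V, (v, y) ∈ A ↔ y = x₁ ∨ y = x₂) (hx : x₁ ≠ x₂)
    (hd1 : 2 ≤ dInDeg A x₁) (hd2 : 2 ≤ dInDeg A x₂)
    (hTs : IsSpanningOutTree A r Tstar) (hTTs : T ⊆ Tstar)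
    (hvint : 1 ≤ dOutDeg Tstar v) (hx1 : dOutDeg Tstar x₁ = 0)
    (hx2 : dOutDeg Tstar x₂ = 0)
    (hu : (u, x₁) ∈ A ∨ (u, x₂) ∈ A) (huv : u ≠ v) (hux₁ : u ≠ x₁)
    (hux₂ : u ≠ x₂) (huint : 1 ≤ dOutDeg Tstar u)
    (hT' : IsSpanningOutTree A r T') (hTT' : T ⊆ T')
    (hvleaf : dOutDeg T' v = 0)
    (hopt : ∀ S : Finset (V × V), IsSpanningOutTree A r S → T ⊆ S →
      dOutDeg S v = 0 → (dleaves r S).card ≤ (dleaves r T').card) :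
    (dleaves r Tstar).card ≤ (dleaves r T').card := by
  obtain ⟨S, hS, hTS, hvS, hcard⟩ := stmt2_general A T Tstar r v x₁ x₂ u hA hvdeg
    (fun y hy => (hNv y).1 (hTs.1.1 hy)) hd1 hd2 hTs hTTs hvint hx1 hx2 hu huv huint
  exact hcard.trans (hopt S hS hTS hvS)
end

section
/- (Correctness of branching rule B1.) Let G=(V,A) be a finite loopless digraph, r ∈ V, T an out-tree of G rooted at r, and v₀ ∈ V(T) a vertex with out-degree 0 in T and out-degree 1 in G. Let v₀, v₁, …, v_k (k ≥ 1) be pairwise distinct vertices such that: N⁺(v₀) = {v₁}; for each i with 1 ≤ i ≤ k−1, N⁺(v_i) \ {v₀,…,v_{i−1}} = {v_{i+1}}; N⁺(v_k) ⊆ {v₀,…,v_{k−1}}; and v₁,…,v_k ∉ V(T). Assume moreover that for every i with 1 ≤ i ≤ k there exist an index z with 1 ≤ z ≤ i and a vertex q ∉ {v₀,…,v_k} with (q,v_z) ∈ A. Then for every spanning out-tree T' of G rooted at r with T' ⪰ T there exists a spanning out-tree T'' of G rooted at r with T'' ⪰ T such that v₀ is a leaf of T'' and |leaves(T'')| ≥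 |leaves(T')|. -/
variable {V : Type*} [DecidableEq V] [Fintype V]

/-!
Suppose `v 0` is not already a leaf of `T'`. Its only out-neighbour is `v 1`, so `T'` contains the
arc `(v 0, v 1)`. The case `i = 1` of the last hypothesis forces `z = 1`, which yields an arc
`(q, v 1)` with `q` off the path. No arc leaves the set of path vertices, so `q` is not a descendant
of `v 1`, and exchanging `(v 0, v 1)` for `(q, v 1)` produces another spanning out-tree. The
exchange makes `v 0` a leaf, while `q` is the only vertex that can cease to be one.
-/

section Reachability

variable {α : Type*} {A T : Finset (α × α)} {x y : α}

theorem DReach.mono (hTA : T ⊆ A) (h : DReach T x y) : DReach A x y :=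
  Relation.ReflTransGen.mono (fun _ _ hab => hTA hab) _ _ h

theorem DReach.mem_of_closed {C : Set α} (hC : ∀ a b, (a, b) ∈ T → a ∈ C → b ∈ C)
    (hx : x ∈ C) (h : DReach T x y) : y ∈ C := by
  induction h with
  | refl => exact hx
  | tail _ hbc hb => exact hC _ _ hbc hb

theorem DReach.exists_le_eq_of_forced_path {k : ℕ} {v : ℕ → α}
    (hstep : ∀ i < k, ∀ y, (v i, y) ∈ A → (∀ j < i, y ≠ v j) → y = v (i + 1))
    (hend : ∀ y, (v k, y) ∈ A → ∃ j < k, y = v j) (h : DReach A (v 0) x) :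
    ∃ i ≤ k, x = v i := by
  refine h.mem_of_closed (C := {x | ∃ i ≤ k, x = v i}) ?_ ⟨0, k.zero_le, rfl⟩
  rintro _ y hy ⟨i, hik, rfl⟩
  obtain rfl | hlt := hik.eq_or_lt
  · obtain ⟨j, hj, rfl⟩ := hend y hy
    exact ⟨j, hj.le, rfl⟩
  · by_cases hnew : ∀ j < i, y ≠ v j
    · exact ⟨i + 1, hlt, hstep i hlt y hy hnew⟩
    · push Not at hnew
      obtain ⟨j, hj, rfl⟩ := hnew
      exact ⟨j, by lia, rfl⟩

end Reachability

section Degree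

variable {α : Type*} [DecidableEq α] {T : Finset (α × α)} {r x a b : α}

theorem dOutDeg_eq_zero_iff_s13 : dOutDeg T x = 0 ↔ ∀ y, (x, y) ∉ T := by
  simp only [dOutDeg, Finset.card_eq_zero, Finset.filter_eq_empty_iff]
  grind

theorem dInDeg_eq_zero_iff_s13 : dInDeg T x = 0 ↔ ∀ y, (y, x) ∉ T := by
  simp only [dInDeg, Finset.card_eq_zero, Finset.filter_eq_empty_iff]
  grind

theorem eq_of_dInDeg_eq_one (h : dInDeg T x = 1) (ha : (a, x) ∈ T) (hb : (b, x) ∈ T) : a = b :=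
  congrArg Prod.fst (Finset.card_le_one.1 h.le (a, x) (by simp [ha]) (b, x) (by simp [hb]))

theorem DReach.mem_dverts (h : DReach T r x) : x ∈ dverts r T := by
  obtain rfl | ⟨c, -, hcx⟩ := h.cases_tail
  · exact Finset.mem_insert_self _ _
  · exact Finset.mem_insert_of_mem
      (Finset.mem_union_right _ (Finset.mem_image_of_mem Prod.snd hcx))

end Degree

section Reattach

variable {α : Type*} [DecidableEq α] {A T : Finset (α × α)} {r u w q x y : α}

/-- The arc exchange `T - (u, w) + (q, w)`. When `T` is an out-tree containing `(u, w)`, it detaches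
the subtree at `w` from its parent `u` and hangs it below `q`. -/
def reattach (T : Finset (α × α)) (u q w : α) : Finset (α × α) :=
  insert (q, w) (T.erase (u, w))

theorem mem_reattach {a : α × α} :
    a ∈ reattach T u q w ↔ a = (q, w) ∨ a ≠ (u, w) ∧ a ∈ T := by
  simp only [reattach, Finset.mem_insert, Finset.mem_erase]

theorem reattach_subset (hTA : T ⊆ A) (hqw : (q, w) ∈ A) : reattach T u q w ⊆ A :=
  Finset.insert_subset hqw ((Finset.erase_subset _ _).trans hTA)

theorem dInDeg_reattach (huw : (u, w) ∈ T) (hqw : (q, w) ∉ T.erase (u, w)) (x : α) :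
    dInDeg (reattach T u q w) x = dInDeg T x := by
  unfold dInDeg reattach
  rw [Finset.filter_insert, Finset.filter_erase]
  split_ifs with hwx
  · rw [Finset.card_insert_of_notMem (by grind), Finset.card_erase_add_one (by grind)]
  · rw [Finset.erase_eq_of_notMem (by grind)]

theorem dOutDeg_reattach_eq_zero (hu : ∀ y, (u, y) ∈ T → y = w) (hqu : q ≠ u) :
    dOutDeg (reattach T u q w) u = 0 := by
  rw [dOutDeg_eq_zero_iff_s13]
  intro y hy
  obtain heq | ⟨hne, huy⟩ := mem_reattach.1 hy
  · exact hqu (congrArg Prod.fst heq).symm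
  · exact hne (congrArg (Prod.mk u) (hu y huy))

theorem DReach.erase_or (h : DReach T x y) : DReach (T.erase (u, w)) x y ∨ DReach T w y := by
  induction h with
  | refl => exact .inl .refl
  | @tail b c _ hbc ih =>
    by_cases hcw : c = w
    · exact .inr (hcw ▸ .refl)
    · exact ih.imp (·.tail (Finset.mem_erase.2 ⟨by grind, hbc⟩)) (·.tail hbc)

theorem DReach.reattach_of_not_dReach (hrq : DReach T r q) (hwq : ¬ DReach T w q)
    (h : DReach T r x) : DReach (reattach T u q w) r x := by
  have hq : DReach (reattach T u q w) r q :=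
    (hrq.erase_or.resolve_right hwq).mono (Finset.subset_insert _ _)
  have hw : DReach (reattach T u q w) r w := hq.tail (Finset.mem_insert_self _ _)
  induction h with
  | refl => exact .refl
  | @tail b c _ hbc ih =>
    by_cases hcw : c = w
    · exact hcw ▸ hw
    · exact ih.tail (mem_reattach.2 (.inr ⟨by grind, hbc⟩))

end Reattach

section Spanning

variable {A T : Finset (V × V)} {r u w q x : V}

theorem isSpanningOutTree_iff_s13 :
    IsSpanningOutTree A r T ↔
      T ⊆ A ∧ dInDeg T r = 0 ∧ (∀ x, x ≠ r → dInDeg T x = 1) ∧ ∀ x, DReach T r x := by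
  constructor
  · rintro ⟨⟨hTA, hr, hin, hreach⟩, hspan⟩
    simp only [hspan, Finset.mem_univ, true_imp_iff] at hin hreach
    exact ⟨hTA, hr, hin, hreach⟩
  · rintro ⟨hTA, hr, hin, hreach⟩
    exact ⟨⟨hTA, hr, fun x _ => hin x, fun x _ => hreach x⟩,
      Finset.eq_univ_iff_forall.2 fun x => (hreach x).mem_dverts⟩

namespace IsSpanningOutTree

theorem mem_dleaves_iff (hT : IsSpanningOutTree A r T) : x ∈ dleaves r T ↔ dOutDeg T x = 0 := by
  simp only [dleaves, hT.2, Finset.mem_filter, Finset.mem_univ, true_and]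

theorem reattach_of_not_dReach (hT : IsSpanningOutTree A r T) (huw : (u, w) ∈ T) (hqw : (q, w) ∈ A)
    (hwq : ¬ DReach T w q) : IsSpanningOutTree A r (reattach T u q w) := by
  obtain ⟨hTA, hr, hin, hreach⟩ := isSpanningOutTree_iff_s13.1 hT
  have hwr : w ≠ r := by
    rintro rfl
    exact dInDeg_eq_zero_iff_s13.1 hr u huw
  have hqw' : (q, w) ∉ T.erase (u, w) := fun h =>
    (Finset.mem_erase.1 h).1 <| congrArg (·, w) <|
      eq_of_dInDeg_eq_one (hin w hwr) (Finset.mem_of_mem_erase h) huw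
  have hdeg := dInDeg_reattach huw hqw'
  exact isSpanningOutTree_iff_s13.2 ⟨reattach_subset hTA hqw, (hdeg r).trans hr,
    fun x hx => (hdeg x).trans (hin x hx),
    fun x => (hreach q).reattach_of_not_dReach hwq (hreach x)⟩

theorem card_dleaves_le_card_dleaves_reattach (hT : IsSpanningOutTree A r T)
    (hS : IsSpanningOutTree A r (reattach T u q w)) (huw : (u, w) ∈ T)
    (hu : u ∈ dleaves r (reattach T u q w)) :
    (dleaves r T).card ≤ (dleaves r (reattach T u q w)).card := by
  have hsub : dleaves r T ⊆ insert q ((dleaves r (reattach T u q w)).erase u) := by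
    intro x hx
    rw [hT.mem_dleaves_iff, dOutDeg_eq_zero_iff_s13] at hx
    rw [Finset.mem_insert, Finset.mem_erase, hS.mem_dleaves_iff, dOutDeg_eq_zero_iff_s13]
    refine or_iff_not_imp_left.2 fun hxq => ⟨?_, fun y hy => ?_⟩
    · rintro rfl
      exact hx w huw
    · obtain heq | ⟨-, hxy⟩ := mem_reattach.1 hy
      · exact hxq (congrArg Prod.fst heq)
      · exact hx y hxy
  calc (dleaves r T).card
      ≤ (insert q ((dleaves r (reattach T u q w)).erase u)).card := Finset.card_le_card hsub
    _ ≤ ((dleaves r (reattach T u q w)).erase u).card + 1 := Finset.card_insert_le _ _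
    _ = (dleaves r (reattach T u q w)).card := Finset.card_erase_add_one hu

end IsSpanningOutTree

end Spanning

theorem stmt13_general (A T : Finset (V × V)) (r u w q : V) (huT : dOutDeg T u = 0)
    (hu : ∀ y, (u, y) ∈ A → y = w) (hqw : (q, w) ∈ A) (huq : ¬ DReach A u q) :
    ∀ T' : Finset (V × V), IsSpanningOutTree A r T' → T ⊆ T' →
      ∃ T'' : Finset (V × V), IsSpanningOutTree A r T'' ∧ T ⊆ T'' ∧
        u ∈ dleaves r T'' ∧ (dleaves r T').card ≤ (dleaves r T'').card := by
  intro T' hT' hTT'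
  by_cases hleaf : u ∈ dleaves r T'
  · exact ⟨T', hT', hTT', hleaf, le_rfl⟩
  have hT'A : T' ⊆ A := hT'.1.1
  have huw : (u, w) ∈ T' := by
    rw [hT'.mem_dleaves_iff, dOutDeg_eq_zero_iff_s13] at hleaf
    push Not at hleaf
    obtain ⟨y, huy⟩ := hleaf
    exact hu y (hT'A huy) ▸ huy
  have hwq : ¬ DReach T' w q := fun h => huq ((h.mono hT'A).head (hT'A huw))
  have hqu : q ≠ u := by
    rintro rfl
    exact huq .refl
  have hS : IsSpanningOutTree A r (reattach T' u q w) := hT'.reattach_of_not_dReach huw hqw hwq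
  have huS : u ∈ dleaves r (reattach T' u q w) :=
    hS.mem_dleaves_iff.2 (dOutDeg_reattach_eq_zero (fun y hy => hu y (hT'A hy)) hqu)
  have hTS : T ⊆ reattach T' u q w := fun a ha => mem_reattach.2 <| .inr
    ⟨fun h => dOutDeg_eq_zero_iff_s13.1 huT w (h ▸ ha), hTT' ha⟩
  exact ⟨_, hS, hTS, huS, hT'.card_dleaves_le_card_dleaves_reattach hS huw huS⟩

theorem stmt13 (A T : Finset (V × V)) (r : V) (k : ℕ) (v : ℕ → V)
    (hA : DLoopless A) (hT : IsOutTree A r T) (hk : 1 ≤ k)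
    (hinj : ∀ i j, i ≤ k → j ≤ k → v i = v j → i = j)
    (hv0T : v 0 ∈ dverts r T) (hv0deg : dOutDeg T (v 0) = 0)
    (hv0G : dOutDeg A (v 0) = 1)
    (hN0 : ∀ y : V, (v 0, y) ∈ A ↔ y = v 1)
    (hNi : ∀ i, 1 ≤ i → i ≤ k - 1 →
      ∀ y : V, ((v i, y) ∈ A ∧ ∀ j < i, y ≠ v j) ↔ y = v (i + 1))
    (hNk : ∀ y : V, (v k, y) ∈ A → ∃ j < k, y = v j)
    (hfree : ∀ i, 1 ≤ i → i ≤ k → v i ∉ dverts r T)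
    (hq : ∀ i, 1 ≤ i → i ≤ k → ∃ z, 1 ≤ z ∧ z ≤ i ∧
      ∃ q : V, (∀ j ≤ k, q ≠ v j) ∧ (q, v z) ∈ A) :
    ∀ T' : Finset (V × V), IsSpanningOutTree A r T' → T ⊆ T' →
      ∃ T'' : Finset (V × V), IsSpanningOutTree A r T'' ∧ T ⊆ T'' ∧
        v 0 ∈ dleaves r T'' ∧ (dleaves r T').card ≤ (dleaves r T'').card := by
  obtain ⟨z, hz1, hz2, q, hqv, hqA⟩ := hq 1 le_rfl hk
  obtain rfl : z = 1 := le_antisymm hz2 hz1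
  refine stmt13_general A T r (v 0) (v 1) q hv0deg (fun y => (hN0 y).1) hqA fun hreach => ?_
  obtain ⟨j, hjk, hqj⟩ := hreach.exists_le_eq_of_forced_path (fun
    | 0, _, y, hy, _ => (hN0 y).1 hy
    | i + 1, hi, y, hy, hnew => (hNi (i + 1) (by lia) (by lia) y).1 ⟨hy, hnew⟩) hNk
  exact hqv j hjk hqj
end
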